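/- arXiv:0808.0752 — 3 statements merged into one kernel-verified Lean document; each statement's English description precedes it below -/
import Mathlib

section
/- Let G be a group and let c₁, c₂, c₃, c₄, c₅, c₆, c₇, e₁, f₁, x₁, x₂, δ₁, δ₂ ∈ G. Assume: the braid relations c₁*c₂*c₁ = c₂*c₁*c₂, c₄*e₁*c₄ = e₁*c₄*e₁, c₄*f₁*c₄ = f₁*c₄*f₁, and c₆*c₇*c₆ = c₇*c₆*c₇; the chain relation (c₄*e₁*c₄*f₁)^3 = δ₁*δ₂; the lantern relations δ₁*x₁*c₃ = c₁*c₁*e₁*f₁ and δ₂*x₂*c₅ = e₁*f₁*c₇*c₇; that δ₁ and δ₂ commute with each other and with each of c₁, c₂, c₃, c₄, c₅, c₆, c₇, e₁, f₁, x₁, x₂; that e₁ commutes with f₁; that c₁ commutes with each of c₃, c₄, c₅, c₆, c₇, e₁, f₁, x₁, x₂; and that e₁ and f₁ each commute with each of x₂, c₅, c₇. Set r = f₁⁻¹*c₄*f₁. Then (c₁*c₂)^2 * (c₄*e₁*c₄*f₁)⁻¹ * (c₇*c₆)^2 = c₁*c₁*c₂*c₁⁻¹*x₁*c₃*r*e₁*e₁*c₄*x₂*c₅*c₆*c₇,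 and consequently ((c₁*c₂)^2 * (c₄*e₁*c₄*f₁)⁻¹ * (c₇*c₆)^2)^3 = c₁ * (c₁*c₂*x₁*c₃*r*e₁*e₁*c₄*x₂*c₅*c₆*c₇)^3 * c₁⁻¹. -/
/-!
Write `w = c₄ e₁ c₄ f₁`, `m = e₁ f₁` and `r = f₁⁻¹ c₄ f₁`. The braid relation between `c₄` and `e₁`
puts `w²` in the form `m (r e₁² c₄) m`, and the chain relation gives `w⁻¹ = δ₁⁻¹ w² δ₂⁻¹`. The two
outer copies of `m` are what the lantern relations need: each of them absorbs one boundary twist, so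
that `c₁² w⁻¹ c₇²` becomes the positive word `(x₁ c₃) (r e₁² c₄) (x₂ c₅)`. Since
`(c₁ c₂)² = c₁² c₂ c₁⁻¹ c₁²` and `(c₇ c₆)² = c₇² c₆ c₇`, the only letter `c₁⁻¹` left over commutes
with everything to its right and is absorbed by a conjugation by `c₁`.
-/

section

theorem mul_sq_of_braid {M : Type*} [Monoid M] {a b : M} (h : a * b * a = b * a * b) :
    (a * b) ^ 2 = a * a * b * a := by
  calc (a * b) ^ 2 = a * (b * a * b) := by simp only [sq, mul_assoc]
    _ = a * a * b * a := by rw [← h]; simp only [mul_assoc]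

variable {G : Type*} [Group G]

theorem chain_word_sq {c e f : G} (hce : c * e * c = e * c * e) (hef : Commute e f) :
    (c * e * c * f) ^ 2 = e * f * (f⁻¹ * c * f * e * e * c) * (e * f) := by
  calc (c * e * c * f) ^ 2 = c * e * c * f * (c * e * c) * f := by simp only [sq, mul_assoc]
    _ = e * c * (e * f) * e * c * e * f := by rw [hce]; simp only [mul_assoc]
    _ = e * c * (f * e) * e * c * e * f := by rw [hef.eq]
    _ = e * f * (f⁻¹ * c * f * e * e * c) * (e * f) := by group

theorem commute_chain_word {g c e f : G} (hc : Commute g c) (he : Commute g e)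
    (hf : Commute g f) : Commute g (c * e * c * f) :=
  ((hc.mul_right he).mul_right hc).mul_right hf

theorem inv_eq_inv_mul_pow_mul_inv {w p q : G} {n : ℕ} (hw : w ^ (n + 1) = p * q)
    (hq : Commute q w) : w⁻¹ = p⁻¹ * w ^ n * q⁻¹ := by
  rw [mul_assoc, eq_inv_mul_iff_mul_eq, eq_mul_inv_iff_mul_eq]
  calc p * w⁻¹ * q = p * q * w⁻¹ := by rw [mul_assoc, mul_assoc, hq.inv_right.eq]
    _ = w ^ n := by rw [← hw, pow_succ, mul_inv_cancel_right]

theorem mul_inv_mul_eq_of_lantern {w m u δ₁ δ₂ a b y₁ y₂ : G} {n : ℕ}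
    (hchain : w ^ (n + 1) = δ₁ * δ₂) (hpow : w ^ n = m * u * m)
    (hlantern₁ : δ₁ * y₁ = a * m) (hlantern₂ : δ₂ * y₂ = m * b)
    (hδ₁ : Commute δ₁ a) (hδ₂w : Commute δ₂ w) (hδ₂m : Commute δ₂ m) :
    a * w⁻¹ * b = y₁ * u * y₂ := by
  calc a * w⁻¹ * b = (a * δ₁⁻¹) * m * u * (m * δ₂⁻¹) * b := by
        rw [inv_eq_inv_mul_pow_mul_inv hchain hδ₂w, hpow]; simp only [mul_assoc]
    _ = δ₁⁻¹ * (a * m) * u * (δ₂⁻¹ * (m * b)) := by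
        rw [← hδ₁.inv_left.eq, ← hδ₂m.inv_left.eq]; simp only [mul_assoc]
    _ = y₁ * u * y₂ := by
        rw [← hlantern₁, ← hlantern₂, inv_mul_cancel_left, inv_mul_cancel_left]

theorem conj_mul_pow_of_commute {a z : G} (b : G) (h : Commute a z) (n : ℕ) :
    (a * b * a⁻¹ * z) ^ n = a * (b * z) ^ n * a⁻¹ := by
  rw [← conj_pow, mul_assoc _ a⁻¹, h.inv_left.eq]
  simp only [mul_assoc]

theorem genus_three_word_general {c₁ c₂ c₃ c₄ c₅ c₆ c₇ e₁ f₁ x₁ x₂ δ₁ δ₂ : G}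
    (hb₁ : c₁ * c₂ * c₁ = c₂ * c₁ * c₂)
    (hb₂ : c₄ * e₁ * c₄ = e₁ * c₄ * e₁)
    (hb₄ : c₆ * c₇ * c₆ = c₇ * c₆ * c₇)
    (hchain : (c₄ * e₁ * c₄ * f₁) ^ 3 = δ₁ * δ₂)
    (hlantern₁ : δ₁ * x₁ * c₃ = c₁ * c₁ * e₁ * f₁)
    (hlantern₂ : δ₂ * x₂ * c₅ = e₁ * f₁ * c₇ * c₇)
    (hδ₁c₁ : Commute δ₁ c₁)
    (hδ₂c₄ : Commute δ₂ c₄) (hδ₂e : Commute δ₂ e₁) (hδ₂f : Commute δ₂ f₁)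
    (hef : Commute e₁ f₁)
    (hc₁c₄ : Commute c₁ c₄) (hc₁c₆ : Commute c₁ c₆) (hc₁c₇ : Commute c₁ c₇)
    (hc₁e : Commute c₁ e₁) (hc₁f : Commute c₁ f₁) (n : ℕ) :
    (c₁ * c₂) ^ 2 * (c₄ * e₁ * c₄ * f₁)⁻¹ * (c₇ * c₆) ^ 2 =
        c₁ * c₁ * c₂ * c₁⁻¹ * x₁ * c₃ * (f₁⁻¹ * c₄ * f₁) * e₁ * e₁ * c₄ * x₂ * c₅ * c₆ * c₇ ∧
    ((c₁ * c₂) ^ 2 * (c₄ * e₁ * c₄ * f₁)⁻¹ * (c₇ * c₆) ^ 2) ^ n =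
        c₁ * (c₁ * c₂ * x₁ * c₃ * (f₁⁻¹ * c₄ * f₁) * e₁ * e₁ * c₄ * x₂ * c₅ * c₆ * c₇) ^ n *
          c₁⁻¹ := by
  have hpos : c₁ * c₁ * (c₄ * e₁ * c₄ * f₁)⁻¹ * (c₇ * c₇) =
      x₁ * c₃ * (f₁⁻¹ * c₄ * f₁ * e₁ * e₁ * c₄) * (x₂ * c₅) :=
    mul_inv_mul_eq_of_lantern hchain (chain_word_sq hb₂ hef)
      (by simpa only [mul_assoc] using hlantern₁) (by simpa only [mul_assoc] using hlantern₂)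
      (hδ₁c₁.mul_right hδ₁c₁) (commute_chain_word hδ₂c₄ hδ₂e hδ₂f) (hδ₂e.mul_right hδ₂f)
  have hcomm : Commute c₁
      (x₁ * c₃ * (f₁⁻¹ * c₄ * f₁ * e₁ * e₁ * c₄) * (x₂ * c₅) * (c₆ * c₇)) := by
    rw [← hpos]
    exact ((((Commute.refl c₁).mul_right (.refl c₁)).mul_right
      (commute_chain_word hc₁c₄ hc₁e hc₁f).inv_right).mul_right (hc₁c₇.mul_right hc₁c₇)).mul_right
      (hc₁c₆.mul_right hc₁c₇)
  have hword : (c₁ * c₂) ^ 2 * (c₄ * e₁ * c₄ * f₁)⁻¹ * (c₇ * c₆) ^ 2 = c₁ * c₁ * c₂ * c₁⁻¹ *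
      (x₁ * c₃ * (f₁⁻¹ * c₄ * f₁ * e₁ * e₁ * c₄) * (x₂ * c₅) * (c₆ * c₇)) := by
    rw [← hpos, mul_sq_of_braid hb₁, mul_sq_of_braid hb₄.symm]
    simp only [mul_assoc, inv_mul_cancel_left]
  rw [hword, mul_assoc c₁ c₁ c₂, conj_mul_pow_of_commute (c₁ * c₂) hcomm n]
  simp only [mul_assoc, and_self]

end

theorem genus_three_word {G : Type*} [Group G]
    (c₁ c₂ c₃ c₄ c₅ c₆ c₇ e₁ f₁ x₁ x₂ δ₁ δ₂ : G)
    (hb₁ : c₁ * c₂ * c₁ = c₂ * c₁ * c₂)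
    (hb₂ : c₄ * e₁ * c₄ = e₁ * c₄ * e₁)
    (hb₃ : c₄ * f₁ * c₄ = f₁ * c₄ * f₁)
    (hb₄ : c₆ * c₇ * c₆ = c₇ * c₆ * c₇)
    (hchain : (c₄ * e₁ * c₄ * f₁) ^ 3 = δ₁ * δ₂)
    (hlantern₁ : δ₁ * x₁ * c₃ = c₁ * c₁ * e₁ * f₁)
    (hlantern₂ : δ₂ * x₂ * c₅ = e₁ * f₁ * c₇ * c₇)
    (hδ : ∀ a ∈ [δ₁, δ₂], ∀ b ∈ [δ₁, δ₂, c₁, c₂, c₃, c₄, c₅, c₆, c₇, e₁, f₁, x₁, x₂],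
      a * b = b * a)
    (hef : e₁ * f₁ = f₁ * e₁)
    (hc₁ : ∀ b ∈ [c₃, c₄, c₅, c₆, c₇, e₁, f₁, x₁, x₂], c₁ * b = b * c₁)
    (hef' : ∀ a ∈ [e₁, f₁], ∀ b ∈ [x₂, c₅, c₇], a * b = b * a) :
    (c₁ * c₂) ^ 2 * (c₄ * e₁ * c₄ * f₁)⁻¹ * (c₇ * c₆) ^ 2 =
        c₁ * c₁ * c₂ * c₁⁻¹ * x₁ * c₃ * (f₁⁻¹ * c₄ * f₁) * e₁ * e₁ * c₄ * x₂ * c₅ * c₆ * c₇ ∧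
    ((c₁ * c₂) ^ 2 * (c₄ * e₁ * c₄ * f₁)⁻¹ * (c₇ * c₆) ^ 2) ^ 3 =
        c₁ * (c₁ * c₂ * x₁ * c₃ * (f₁⁻¹ * c₄ * f₁) * e₁ * e₁ * c₄ * x₂ * c₅ * c₆ * c₇) ^ 3 *
          c₁⁻¹ := by
  apply genus_three_word_general hb₁ hb₂ hb₄ hchain hlantern₁ hlantern₂ (hef := hef) <;>
    first | exact hc₁ _ (by simp) | exact hδ _ (by simp) _ (by simp)
end

section
/- Let G be a group and let c₁, c₂, c₃, c₄, c₅, c₆, c₇, e₁, f₁, x₁, x₂, x̄₂, δ₁, δ₂, t, v ∈ G. Assume all the hypotheses of the alternate genus-3 computation: the braid relations c₁*c₂*c₁ = c₂*c₁*c₂, c₄*e₁*c₄ = e₁*c₄*e₁, c₄*f₁*c₄ = f₁*c₄*f₁, c₆*c₇*c₆ = c₇*c₆*c₇; the chain relation (c₄*e₁*c₄*f₁)^3 = δ₁*δ₂; the lantern relations δ₁*x₁*c₃ = c₁*c₁*e₁*f₁, δ₂*x₂*c₅ = e₁*f₁*c₇*c₇, and f₁*t*v = c₁*c₃*c₅*c₇;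 the identity c₅*x̄₂ = x₂*c₅; that δ₁, δ₂ commute with each other and with all other listed elements; e₁ commutes with f₁; c₁ commutes with each of c₃, c₄, c₅, c₆, c₇, e₁, f₁, x₁, x₂, t, v; e₁ and f₁ each commute with x₂, c₅, c₇; c₁, c₃, c₅, c₇ pairwise commute; c₃ commutes with t and v; c₇ commutes with c₄, e₁, f₁, x₂. Assume moreover the chain relation e₁*f₁ = (c₁*c₂*c₃)^4. Set ȳ₁ = c₁*c₁*c₂*c₁⁻¹*c₁⁻¹, s₂ = c₅⁻¹*c₄*c₅, r₃ = c₇⁻¹*c₆*c₇. Then (c₁*c₂)^2 * (c₄*e₁*c₄*f₁)⁻¹ * (c₇*c₆)^2 = ȳ₁*x₁*t*v*s₂*(c₁*c₂*c₃)^4*e₁*s₂*x̄₂*r₃. -/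
/-!
Write `m = c₄ e₁ c₄ f₁`, `y = c₁² c₂ c₁⁻²` and `r = c₇⁻¹ c₆ c₇`. The braid relations give
`(c₁ c₂)² = y c₁³` and `(c₇ c₆)² = c₇³ r`, so everything reduces to rewriting `c₁³ m⁻¹ c₇³`.
The chain relation `m³ = δ₁ δ₂` turns `m⁻¹` into the positive word `m²` at the cost of `(δ₁ δ₂)⁻¹`.
The lantern relations for `x₁` and for `t v` absorb `δ₁` into `x₁ t v`, and the one for `x₂` absorbs
`δ₂` into `xb₂`. The resulting word contains `e₁ f₁`, which the second chain relation replaces by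
`(c₁ c₂ c₃)⁴`.
-/

section

variable {G : Type*} [Group G]

theorem mul_sq_eq_conj_mul_pow_three_of_braid {a b : G} (h : a * b * a = b * a * b) :
    (a * b) ^ 2 = a * a * b * a⁻¹ * a⁻¹ * a ^ 3 :=
  calc
    (a * b) ^ 2 = a * (b * a * b) := by simp only [sq, mul_assoc]
    _ = a * (a * b * a) := by rw [h]
    _ = a * a * b * a⁻¹ * a⁻¹ * a ^ 3 := by group

theorem mul_sq_eq_pow_three_mul_conj_of_braid {a b : G} (h : a * b * a = b * a * b) :
    (a * b) ^ 2 = a ^ 3 * (a⁻¹ * b * a) :=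
  calc
    (a * b) ^ 2 = a * (b * a * b) := by simp only [sq, mul_assoc]
    _ = a * (a * b * a) := by rw [h]
    _ = a ^ 3 * (a⁻¹ * b * a) := by simp [pow_three, mul_assoc]

theorem conj_mul_mul_conj_of_commute {b z : G} (c : G) (hbz : Commute b z) :
    b⁻¹ * c * b * z * (b⁻¹ * c * b) = b⁻¹ * (c * z * c) * b :=
  calc
    b⁻¹ * c * b * z * (b⁻¹ * c * b) = b⁻¹ * c * (b * z * b⁻¹) * c * b := by group
    _ = b⁻¹ * (c * z * c) * b := by rw [hbz.mul_inv_cancel]; group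

theorem mul_inv_of_chain {c e f δ : G} (hbraid : c * e * c = e * c * e)
    (hchain : (c * e * c * f) ^ 3 = δ) :
    δ * (c * e * c * f)⁻¹ = e * (c * (e * f * e) * c * (e * f)) :=
  calc
    δ * (c * e * c * f)⁻¹ = c * e * c * f * (c * e * c * f) := by
      rw [← hchain, pow_succ, mul_inv_cancel_right, sq]
    _ = e * c * e * f * (e * c * e * f) := by rw [hbraid]
    _ = e * (c * (e * f * e) * c * (e * f)) := by group

theorem lantern_mul_lantern {a c e f p q x δ : G}
    (hlantern : δ * x * c = a * a * e * f) (hlantern' : f * p = a * c * q)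
    (hcp : Commute c p) (hcq : Commute c q) (hae : Commute a e) :
    δ * (x * p) = a ^ 3 * e * q := by
  apply mul_right_cancel (b := c)
  calc
    δ * (x * p) * c = δ * x * (p * c) := by group
    _ = δ * x * c * p := by rw [← hcp.eq]; group
    _ = a * a * e * (f * p) := by rw [hlantern]; group
    _ = a * a * (e * a) * (c * q) := by rw [hlantern']; group
    _ = a ^ 3 * e * q * c := by rw [← hae.eq, hcq.eq]; simp only [pow_three, mul_assoc]

theorem lantern_mul_conj_mul_conj {a b c d p y z : G} {n : ℕ}
    (hlantern : d * (b * y) = p * a ^ n)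
    (hab : Commute a b) (hac : Commute a c) (hap : Commute a p) (haz : Commute a z)
    (hbz : Commute b z) (hda : Commute d a) (hdc : Commute d c) (hdz : Commute d z) :
    d * (b * a * (b⁻¹ * c * b * z * (b⁻¹ * c * b) * y)) = c * z * c * p * a ^ (n + 1) := by
  have hd : Commute d (a * (c * z * c)) := hda.mul_right ((hdc.mul_right hdz).mul_right hdc)
  have ha : Commute a (c * z * c * p) := ((hac.mul_right haz).mul_right hac).mul_right hap
  calc
    d * (b * a * (b⁻¹ * c * b * z * (b⁻¹ * c * b) * y))
    _ = d * (a * (c * z * c)) * (b * y) := by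
      rw [conj_mul_mul_conj_of_commute c hbz, ← hab.eq]; group
    _ = a * (c * z * c) * (d * (b * y)) := by rw [hd.eq, mul_assoc]
    _ = a * (c * z * c * p) * a ^ n := by rw [hlantern]; simp only [mul_assoc]
    _ = c * z * c * p * a ^ (n + 1) := by rw [ha.eq, pow_succ', mul_assoc]

theorem mul_mul_eq_mul_of_commute_factors {a b d d' e k m w x y : G}
    (hm : d * d' * m = e * w) (hx : d * x = a * e * k) (hy : d' * (k * y) = w * b)
    (hdd' : Commute d d') (hda : Commute d a) (hd'a : Commute d' a) (hd'e : Commute d' e) :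
    a * m * b = x * y := by
  have hdd'a : Commute (d * d') a := hda.mul_left hd'a
  have hd'ae : Commute d' (a * e) := hd'a.mul_right hd'e
  apply mul_left_cancel (a := d * d')
  calc
    d * d' * (a * m * b)
    _ = a * (d * d' * m) * b := by simp only [← mul_assoc, ← hdd'a.eq]
    _ = a * e * (w * b) := by rw [hm]; simp only [mul_assoc]
    _ = a * e * d' * (k * y) := by rw [← hy, mul_assoc _ d']
    _ = d' * (a * e * k) * y := by rw [← hd'ae.eq]; simp only [mul_assoc]
    _ = d * d' * (x * y) := by rw [← hx, hdd'.eq]; simp only [mul_assoc]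

theorem genus_three_second_alternate_general
    {c₁ c₂ c₃ c₄ c₅ c₆ c₇ e₁ f₁ x₁ x₂ xb₂ δ₁ δ₂ t v : G}
    (hb₁ : c₁ * c₂ * c₁ = c₂ * c₁ * c₂)
    (hb₂ : c₄ * e₁ * c₄ = e₁ * c₄ * e₁)
    (hb₄ : c₆ * c₇ * c₆ = c₇ * c₆ * c₇)
    (hchain : (c₄ * e₁ * c₄ * f₁) ^ 3 = δ₁ * δ₂)
    (hlantern₁ : δ₁ * x₁ * c₃ = c₁ * c₁ * e₁ * f₁)
    (hlantern₂ : δ₂ * x₂ * c₅ = e₁ * f₁ * c₇ * c₇)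
    (hlantern₃ : f₁ * t * v = c₁ * c₃ * c₅ * c₇)
    (hx₂ : c₅ * xb₂ = x₂ * c₅)
    (hδ₁δ₂ : Commute δ₁ δ₂) (hδ₁c₁ : Commute δ₁ c₁)
    (hδ₂c₁ : Commute δ₂ c₁) (hδ₂c₄ : Commute δ₂ c₄) (hδ₂c₇ : Commute δ₂ c₇)
    (hδ₂e₁ : Commute δ₂ e₁) (hδ₂f₁ : Commute δ₂ f₁)
    (hc₁e₁ : Commute c₁ e₁) (he₁c₅ : Commute e₁ c₅) (hf₁c₅ : Commute f₁ c₅)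
    (hc₃c₅ : Commute c₃ c₅) (hc₃c₇ : Commute c₃ c₇) (hc₅c₇ : Commute c₅ c₇)
    (hc₃t : Commute c₃ t) (hc₃v : Commute c₃ v)
    (hc₇c₄ : Commute c₇ c₄) (hc₇e₁ : Commute c₇ e₁) (hc₇f₁ : Commute c₇ f₁)
    (hchain₂ : e₁ * f₁ = (c₁ * c₂ * c₃) ^ 4) :
    (c₁ * c₂) ^ 2 * (c₄ * e₁ * c₄ * f₁)⁻¹ * (c₇ * c₆) ^ 2 =
      (c₁ * c₁ * c₂ * c₁⁻¹ * c₁⁻¹) * x₁ * t * v * (c₅⁻¹ * c₄ * c₅) * (c₁ * c₂ * c₃) ^ 4 *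
        e₁ * (c₅⁻¹ * c₄ * c₅) * xb₂ * (c₇⁻¹ * c₆ * c₇) := by
  have left_lanterns : δ₁ * (x₁ * (t * v)) = c₁ ^ 3 * e₁ * (c₅ * c₇) :=
    lantern_mul_lantern hlantern₁ (by simpa only [mul_assoc] using hlantern₃)
      (hc₃t.mul_right hc₃v) (hc₃c₅.mul_right hc₃c₇) hc₁e₁
  have right_lantern : δ₂ * (c₅ * xb₂) = e₁ * f₁ * c₇ ^ 2 := by
    rw [hx₂, ← mul_assoc, hlantern₂, sq, mul_assoc]
  have hc₅e₁f₁e₁ : Commute c₅ (e₁ * f₁ * e₁) := ((he₁c₅.mul_left hf₁c₅).mul_left he₁c₅).symm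
  have hc₇e₁f₁ : Commute c₇ (e₁ * f₁) := hc₇e₁.mul_right hc₇f₁
  have hδ₂e₁f₁e₁ : Commute δ₂ (e₁ * f₁ * e₁) := (hδ₂e₁.mul_right hδ₂f₁).mul_right hδ₂e₁
  have right_word := lantern_mul_conj_mul_conj right_lantern hc₅c₇.symm hc₇c₄ hc₇e₁f₁
    (hc₇e₁f₁.mul_right hc₇e₁) hc₅e₁f₁e₁ hδ₂c₇ hδ₂c₄ hδ₂e₁f₁e₁
  have middle_word : c₁ ^ 3 * (c₄ * e₁ * c₄ * f₁)⁻¹ * c₇ ^ 3 =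
      x₁ * (t * v) * (c₅⁻¹ * c₄ * c₅ * (e₁ * f₁ * e₁) * (c₅⁻¹ * c₄ * c₅) * xb₂) :=
    mul_mul_eq_mul_of_commute_factors (mul_inv_of_chain hb₂ hchain) left_lanterns right_word
      hδ₁δ₂ (hδ₁c₁.pow_right 3) (hδ₂c₁.pow_right 3) hδ₂e₁
  rw [mul_sq_eq_conj_mul_pow_three_of_braid hb₁, mul_sq_eq_pow_three_mul_conj_of_braid hb₄.symm,
    ← hchain₂]
  calc
    c₁ * c₁ * c₂ * c₁⁻¹ * c₁⁻¹ * c₁ ^ 3 * (c₄ * e₁ * c₄ * f₁)⁻¹ * (c₇ ^ 3 * (c₇⁻¹ * c₆ * c₇))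
    _ = c₁ * c₁ * c₂ * c₁⁻¹ * c₁⁻¹ * (c₁ ^ 3 * (c₄ * e₁ * c₄ * f₁)⁻¹ * c₇ ^ 3) *
        (c₇⁻¹ * c₆ * c₇) := by simp only [mul_assoc]
    _ = _ := by rw [middle_word]; simp only [mul_assoc]

end

theorem genus_three_second_alternate {G : Type*} [Group G]
    (c₁ c₂ c₃ c₄ c₅ c₆ c₇ e₁ f₁ x₁ x₂ xb₂ δ₁ δ₂ t v : G)
    (hb₁ : c₁ * c₂ * c₁ = c₂ * c₁ * c₂)
    (hb₂ : c₄ * e₁ * c₄ = e₁ * c₄ * e₁)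
    (hb₃ : c₄ * f₁ * c₄ = f₁ * c₄ * f₁)
    (hb₄ : c₆ * c₇ * c₆ = c₇ * c₆ * c₇)
    (hchain : (c₄ * e₁ * c₄ * f₁) ^ 3 = δ₁ * δ₂)
    (hlantern₁ : δ₁ * x₁ * c₃ = c₁ * c₁ * e₁ * f₁)
    (hlantern₂ : δ₂ * x₂ * c₅ = e₁ * f₁ * c₇ * c₇)
    (hlantern₃ : f₁ * t * v = c₁ * c₃ * c₅ * c₇)
    (hx₂ : c₅ * xb₂ = x₂ * c₅)
    (hδ : ∀ a ∈ [δ₁, δ₂],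
      ∀ b ∈ [δ₁, δ₂, c₁, c₂, c₃, c₄, c₅, c₆, c₇, e₁, f₁, x₁, x₂, xb₂, t, v],
      a * b = b * a)
    (hef : e₁ * f₁ = f₁ * e₁)
    (hc₁ : ∀ b ∈ [c₃, c₄, c₅, c₆, c₇, e₁, f₁, x₁, x₂, t, v], c₁ * b = b * c₁)
    (hef' : ∀ a ∈ [e₁, f₁], ∀ b ∈ [x₂, c₅, c₇], a * b = b * a)
    (hpair : List.Pairwise (fun a b => a * b = b * a) [c₁, c₃, c₅, c₇])
    (hc₃ : ∀ b ∈ [t, v], c₃ * b = b * c₃)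
    (hc₇ : ∀ b ∈ [c₄, e₁, f₁, x₂], c₇ * b = b * c₇)
    (hchain₂ : e₁ * f₁ = (c₁ * c₂ * c₃) ^ 4) :
    (c₁ * c₂) ^ 2 * (c₄ * e₁ * c₄ * f₁)⁻¹ * (c₇ * c₆) ^ 2 =
      (c₁ * c₁ * c₂ * c₁⁻¹ * c₁⁻¹) * x₁ * t * v * (c₅⁻¹ * c₄ * c₅) * (c₁ * c₂ * c₃) ^ 4 *
        e₁ * (c₅⁻¹ * c₄ * c₅) * xb₂ * (c₇⁻¹ * c₆ * c₇) := by
  simp only [List.forall_mem_cons, List.pairwise_cons] at hδ hc₁ hef' hpair hc₃ hc₇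
  apply genus_three_second_alternate_general hb₁ hb₂ hb₄ hchain hlantern₁ hlantern₂ hlantern₃ hx₂
  all_goals tauto
end

section
/- Let G be a group, let g ≥ 4 be an even integer, and let c₁, …, c_{2g+1}, e₁, …, e_{g−2}, f₁, …, f_{g−2}, x₁, …, x_{g−1}, δ₁, …, δ_{g−1} ∈ G. Assume: the braid relations a*b*a = b*a*b for the pairs (c₁, c₂), (c_{2g}, c_{2g+1}), and (c_{2i+2}, e_i), (c_{2i+2}, f_i) for every 1 ≤ i ≤ g−2; the chain relations (c_{2i+2}*e_i*c_{2i+2}*f_i)^3 = δ_i*δ_{i+1} for every odd i with 1 ≤ i ≤ g−3, and (c_{2g+1}*c_{2g})^6 = δ_{g−1}; the lantern relations δ₁*x₁*c₃ = c₁*c₁*e₁*f₁, δ_i*x_i*c_{2i+1} = e_{i−1}*f_{i−1}*e_i*f_i for every 2 ≤ i ≤ g−2, and δ_{g−1}*x_{g−1}*c_{2g−1} = e_{g−2}*f_{g−2}*c_{2g+1}*c_{2g+1}; that every δ_i commutes with every other listed element (including every δ_j); and the commutations: e_i commutes with f_i for all i; e_i and f_i commute with e_j and f_j for all j ≠ i,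 with x_j for all j, and with c_k for all k ≠ 2i+2; and c₁ commutes with x₁ and c₃. Set d = c₁*c₂*c₁⁻¹ and r_j = f_j⁻¹*c_{2j+2}*f_j. Then (c₁*c₂)^2 * ∏_{i=1}^{g−2} (c_{2i+2}*e_i*c_{2i+2}*f_i)^{ε_i} * ((c_{2g+1}*c_{2g})^2)⁻¹, where ε_i = −1 for odd i and ε_i = +1 for even i and the factors are taken in increasing order of i, equals c₁ * d * ∏_{odd j, 1 ≤ j ≤ g−3} ( x_j * c_{2j+1} * r_j * e_j * e_j * c_{2j+2} * x_{j+1} * c_{2j+3} * f_{j+1}⁻¹ * c_{2j+4} ) * x_{g−1} * c_{2g−1} * c_{2g} * c_{2g+1} * c_{2g+1} * c_{2g} * c_{2g+1} * c_{2g}, where again the factors of the product are taken in increasing order of j. -/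
/-!
Put `p₀ = c₁c₁` and `pᵢ = eᵢfᵢ`, and let `wᵢ = c₂ᵢ₊₂ eᵢ c₂ᵢ₊₂ fᵢ`. For odd `i` the chain relation
`wᵢ³ = δᵢδᵢ₊₁` trades `wᵢ⁻¹` for the positive word `wᵢ²` and the two letters `δᵢ⁻¹`, `δᵢ₊₁⁻¹`, which
are then absorbed by the lantern relations at `i` and `i + 1`. The outcome is
`pᵢ₋₁ wᵢ⁻¹ wᵢ₊₁ = Bᵢ pᵢ₊₁`, where `Bᵢ` is the `i`-th factor of the target word. Since
`(c₁c₂)² = c₁ (c₁ c₂ c₁⁻¹) p₀`, these identities telescope and leave `p_{g-2} (c_{2g+1} c_{2g})⁻²`,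
where the last chain and lantern relations turn the negative square into a positive word.
-/

theorem prod_map_Ico_one_two_mul_add_one {M : Type*} [Monoid M] (F : ℕ → M) (m : ℕ) :
    ((List.Ico 1 (2 * m + 1)).map F).prod =
      ((List.range m).map fun k => F (2 * k + 1) * F (2 * k + 2)).prod := by
  induction m with
  | zero => rfl
  | succ m ih =>
    rw [Nat.mul_succ, List.Ico.succ_top (by omega), List.Ico.succ_top (by omega),
      List.prod_range_succ, ← ih]
    simp only [List.map_append, List.map_singleton, List.prod_append, List.prod_singleton,
      mul_assoc]

theorem filter_odd_Ico_one_two_mul (m : ℕ) :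
    (List.Ico 1 (2 * m)).filter (fun j => Odd j) = (List.range m).map fun k => 2 * k + 1 := by
  induction m with
  | zero => rfl
  | succ m ih =>
    rw [Nat.mul_succ, List.Ico.succ_top (by omega), List.range_succ, List.map_append, ← ih]
    rcases m.eq_zero_or_pos with rfl | hm
    · decide
    · rw [List.Ico.succ_top (by omega)]
      simp

theorem mul_prod_map_range_of_mul_eq_mul {M : Type*} [Monoid M] {A B E : ℕ → M} {m : ℕ}
    (h : ∀ k < m, E k * A k = B k * E (k + 1)) :
    E 0 * ((List.range m).map A).prod = ((List.range m).map B).prod * E m := by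
  induction m with
  | zero => simp
  | succ m ih =>
    rw [List.prod_range_succ, List.prod_range_succ, ← mul_assoc,
      ih fun k hk => h k (hk.trans m.lt_succ_self), mul_assoc, h m m.lt_succ_self, mul_assoc]

section GroupWords

variable {G : Type*} [Group G]

theorem mul_sq_of_braid_s14 {a b : G} (hab : a * b * a = b * a * b) :
    (a * b) ^ 2 = a * (a * b * a⁻¹) * (a * a) := by
  calc (a * b) ^ 2 = a * (b * a * b) := by simp only [pow_two, mul_assoc]
    _ = a * (a * b * a⁻¹) * (a * a) := by rw [← hab]; group

theorem mul_pow_four_of_braid {a b : G} (hab : a * b * a = b * a * b) :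
    (b * a) ^ 4 = b * b * a * b * b * a * b * a := by
  calc (b * a) ^ 4 = b * (a * b * a) * b * a * b * a := by
        simp only [pow_succ, pow_zero, one_mul, mul_assoc]
    _ = b * b * a * b * b * a * b * a := by rw [hab]; simp only [mul_assoc]

theorem chainWord_sq_of_braid {c e f : G} (hce : c * e * c = e * c * e) (hef : Commute e f) :
    (c * e * c * f) ^ 2 = e * c * f * e * e * c * e * f := by
  calc (c * e * c * f) ^ 2 = c * e * c * f * (c * e * c) * f := by simp only [pow_two, mul_assoc]
    _ = e * c * (e * f) * e * c * e * f := by rw [hce]; simp only [mul_assoc]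
    _ = e * c * f * e * e * c * e * f := by rw [hef.eq]; simp only [mul_assoc]

theorem chainWord_inv_of_chain {c e f d d' : G} (hce : c * e * c = e * c * e) (hef : Commute e f)
    (hchain : (c * e * c * f) ^ 3 = d * d')
    (hd'c : Commute d' c) (hd'e : Commute d' e) (hd'f : Commute d' f) :
    (c * e * c * f)⁻¹ = d⁻¹ * (e * c * f * e * e * c) * d'⁻¹ * (e * f) := by
  have hd'w : Commute d' (c * e * c * f) :=
    ((hd'c.mul_right hd'e).mul_right hd'c).mul_right hd'f
  have hd'd : Commute d' d := by
    rw [eq_mul_inv_of_mul_eq hchain.symm]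
    exact (hd'w.pow_right 3).mul_right (Commute.refl d').inv_right
  have hd'u : Commute d'⁻¹ (e * c * f * e * e * c) :=
    (((((hd'e.mul_right hd'c).mul_right hd'f).mul_right hd'e).mul_right hd'e).mul_right
      hd'c).inv_left
  calc (c * e * c * f)⁻¹ = ((c * e * c * f) ^ 3)⁻¹ * (c * e * c * f) ^ 2 := by group
    _ = d⁻¹ * (d'⁻¹ * (e * c * f * e * e * c)) * (e * f) := by
      rw [hchain, ← hd'd.eq, mul_inv_rev, chainWord_sq_of_braid hce hef]; simp only [mul_assoc]
    _ = d⁻¹ * (e * c * f * e * e * c) * d'⁻¹ * (e * f) := by rw [hd'u.eq]; simp only [mul_assoc]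

theorem mul_eq_of_lantern {d x u p q : G} (hl : d * x * u = p * q) : x * u = d⁻¹ * p * q := by
  rw [mul_assoc d⁻¹, ← hl, mul_assoc d, inv_mul_cancel_left]

theorem mul_chainWord_inv_mul_chainWord {p c e f u x c' e' f' v y d d' : G}
    (hce : c * e * c = e * c * e) (hce' : c' * e' * c' = e' * c' * e') (hef : Commute e f)
    (hchain : (c * e * c * f) ^ 3 = d * d')
    (hl : d * x * u = p * (e * f)) (hl' : d' * y * v = e * f * (e' * f')) (hdp : Commute d p)
    (hd'c : Commute d' c) (hd'e : Commute d' e) (hd'f : Commute d' f) :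
    p * ((c * e * c * f)⁻¹ * (c' * e' * c' * f')) =
      x * u * (f⁻¹ * c * f) * e * e * c * y * v * f'⁻¹ * c' * (e' * f') := by
  calc p * ((c * e * c * f)⁻¹ * (c' * e' * c' * f'))
      = p * d⁻¹ * (e * c * f * e * e * c) * d'⁻¹ * (e * f) * (e' * c' * e' * f') := by
        rw [chainWord_inv_of_chain hce hef hchain hd'c hd'e hd'f, hce']; simp only [mul_assoc]
    _ = d⁻¹ * p * (e * f) * (f⁻¹ * c * f) * e * e * c * (d'⁻¹ * (e * f) * (e' * f')) * f'⁻¹ * c' *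
          (e' * f') := by rw [← hdp.inv_left.eq]; group
    _ = x * u * (f⁻¹ * c * f) * e * e * c * y * v * f'⁻¹ * c' * (e' * f') := by
        rw [← mul_eq_of_lantern hl, ← mul_eq_of_lantern hl']; simp only [mul_assoc]

theorem mul_mul_sq_inv_of_lantern {p a b u x d : G} (hab : a * b * a = b * a * b)
    (hchain : (b * a) ^ 6 = d) (hl : d * x * u = p * (b * b)) (hdp : Commute d p) :
    p * ((b * a) ^ 2)⁻¹ = x * u * a * b * b * a * b * a := by
  calc p * ((b * a) ^ 2)⁻¹ = p * ((b * a) ^ 6)⁻¹ * (b * a) ^ 4 := by group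
    _ = d⁻¹ * p * (b * b * a * b * b * a * b * a) := by
      rw [hchain, mul_pow_four_of_braid hab, hdp.inv_left.eq]
    _ = d⁻¹ * p * (b * b) * a * b * b * a * b * a := by simp only [mul_assoc]
    _ = x * u * a * b * b * a * b * a := by rw [← mul_eq_of_lantern hl]

/-- The product `pᵢ` of the two boundary curves shared by the `i`-th and the `(i + 1)`-st lantern.
The curve `c 1` plays the role of both missing curves `e 0` and `f 0`. -/
def boundaryPair (c e f : ℕ → G) : ℕ → G
  | 0 => c 1 * c 1
  | i + 1 => e (i + 1) * f (i + 1)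

theorem boundaryPair_of_pos (c e f : ℕ → G) {i : ℕ} (hi : 0 < i) :
    boundaryPair c e f i = e i * f i := by
  obtain ⟨j, rfl⟩ := Nat.exists_eq_add_one.mpr hi
  rfl

theorem commute_boundaryPair {c e f δ : ℕ → G} {n : ℕ} (hδ₁ : Commute (δ 1) (c 1))
    (hδe : ∀ i, 1 ≤ i → i ≤ n → Commute (δ (i + 1)) (e i))
    (hδf : ∀ i, 1 ≤ i → i ≤ n → Commute (δ (i + 1)) (f i)) :
    ∀ i ≤ n, Commute (δ (i + 1)) (boundaryPair c e f i)
  | 0, _ => hδ₁.mul_right hδ₁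
  | i + 1, hi => (hδe _ i.succ_pos hi).mul_right (hδf _ i.succ_pos hi)

theorem lantern_boundaryPair {c e f x δ : ℕ → G} {n : ℕ}
    (hlantern₁ : δ 1 * x 1 * c 3 = c 1 * c 1 * e 1 * f 1)
    (hlantern : ∀ i, 2 ≤ i → i ≤ n →
      δ i * x i * c (2 * i + 1) = e (i - 1) * f (i - 1) * e i * f i) :
    ∀ i < n, δ (i + 1) * x (i + 1) * c (2 * (i + 1) + 1) =
      boundaryPair c e f i * boundaryPair c e f (i + 1)
  | 0, _ => by rw [boundaryPair, boundaryPair, ← mul_assoc]; exact hlantern₁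
  | i + 1, hi => by rw [boundaryPair, boundaryPair, ← mul_assoc]; exact hlantern _ (by omega) hi

theorem boundaryPair_zero_mul_prod_chainWord (c e f x δ : ℕ → G) (m : ℕ)
    (hbe : ∀ i, 1 ≤ i → i ≤ 2 * m →
      c (2 * i + 2) * e i * c (2 * i + 2) = e i * c (2 * i + 2) * e i)
    (hchain : ∀ i, Odd i → i < 2 * m →
      (c (2 * i + 2) * e i * c (2 * i + 2) * f i) ^ 3 = δ i * δ (i + 1))
    (hlantern : ∀ i < 2 * m, δ (i + 1) * x (i + 1) * c (2 * (i + 1) + 1) =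
      boundaryPair c e f i * boundaryPair c e f (i + 1))
    (hδp : ∀ i < 2 * m, Commute (δ (i + 1)) (boundaryPair c e f i))
    (hδc : ∀ i, Odd i → i < 2 * m → Commute (δ (i + 1)) (c (2 * i + 2)))
    (hδe : ∀ i, Odd i → i < 2 * m → Commute (δ (i + 1)) (e i))
    (hδf : ∀ i, Odd i → i < 2 * m → Commute (δ (i + 1)) (f i))
    (hef : ∀ i, Odd i → i < 2 * m → Commute (e i) (f i)) :
    boundaryPair c e f 0 *
      ((List.Ico 1 (2 * m + 1)).map (fun i =>
        if Odd i then (c (2 * i + 2) * e i * c (2 * i + 2) * f i)⁻¹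
        else c (2 * i + 2) * e i * c (2 * i + 2) * f i)).prod =
    (((List.Ico 1 (2 * m)).filter (fun j => Odd j)).map (fun j =>
      x j * c (2 * j + 1) * ((f j)⁻¹ * c (2 * j + 2) * f j) * e j * e j * c (2 * j + 2) *
        x (j + 1) * c (2 * j + 3) * (f (j + 1))⁻¹ * c (2 * j + 4))).prod *
      boundaryPair c e f (2 * m) := by
  rw [prod_map_Ico_one_two_mul_add_one, filter_odd_Ico_one_two_mul, List.map_map]
  refine mul_prod_map_range_of_mul_eq_mul (E := fun k => boundaryPair c e f (2 * k))
    fun k hk => ?_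
  have hodd : Odd (2 * k + 1) := odd_two_mul_add_one k
  have hnotodd : ¬ Odd (2 * k + 2) := Nat.not_odd_iff_even.mpr (even_two_mul (k + 1))
  have hlt : 2 * k + 1 < 2 * m := by omega
  simp only [if_pos hodd, if_neg hnotodd]
  exact mul_chainWord_inv_mul_chainWord (hbe _ (by omega) hlt.le) (hbe _ (by omega) hlt)
    (hef _ hodd hlt) (hchain _ hodd hlt) (hlantern _ (by omega)) (hlantern _ hlt)
    (hδp _ (by omega)) (hδc _ hodd hlt) (hδe _ hodd hlt) (hδf _ hodd hlt)

theorem even_genus_word_general (g : ℕ) (hg4 : 4 ≤ g) (hgeven : Even g) (c e f x δ : ℕ → G)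
    (hb₁ : c 1 * c 2 * c 1 = c 2 * c 1 * c 2)
    (hb₂ : c (2 * g) * c (2 * g + 1) * c (2 * g) = c (2 * g + 1) * c (2 * g) * c (2 * g + 1))
    (hbe : ∀ i, 1 ≤ i → i ≤ g - 2 →
      c (2 * i + 2) * e i * c (2 * i + 2) = e i * c (2 * i + 2) * e i)
    (hchain : ∀ i, Odd i → i < g - 2 →
      (c (2 * i + 2) * e i * c (2 * i + 2) * f i) ^ 3 = δ i * δ (i + 1))
    (hchain' : (c (2 * g + 1) * c (2 * g)) ^ 6 = δ (g - 1))
    (hlantern₁ : δ 1 * x 1 * c 3 = c 1 * c 1 * e 1 * f 1)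
    (hlantern : ∀ i, 2 ≤ i → i ≤ g - 2 →
      δ i * x i * c (2 * i + 1) = e (i - 1) * f (i - 1) * e i * f i)
    (hlantern' : δ (g - 1) * x (g - 1) * c (2 * g - 1) =
      e (g - 2) * f (g - 2) * c (2 * g + 1) * c (2 * g + 1))
    (hδ₁ : Commute (δ 1) (c 1))
    (hδc : ∀ i, Odd i → i < g - 2 → Commute (δ (i + 1)) (c (2 * i + 2)))
    (hδe : ∀ i, 1 ≤ i → i ≤ g - 2 → Commute (δ (i + 1)) (e i))
    (hδf : ∀ i, 1 ≤ i → i ≤ g - 2 → Commute (δ (i + 1)) (f i))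
    (hef : ∀ i, Odd i → i < g - 2 → Commute (e i) (f i)) :
    (c 1 * c 2) ^ 2 *
      ((List.Ico 1 (g - 1)).map (fun i =>
        if Odd i then (c (2 * i + 2) * e i * c (2 * i + 2) * f i)⁻¹
        else c (2 * i + 2) * e i * c (2 * i + 2) * f i)).prod *
      ((c (2 * g + 1) * c (2 * g)) ^ 2)⁻¹ =
    c 1 * (c 1 * c 2 * (c 1)⁻¹) *
      (((List.Ico 1 (g - 2)).filter (fun j => Odd j)).map (fun j =>
        x j * c (2 * j + 1) * ((f j)⁻¹ * c (2 * j + 2) * f j) * e j * e j * c (2 * j + 2) *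
          x (j + 1) * c (2 * j + 3) * (f (j + 1))⁻¹ * c (2 * j + 4))).prod *
      x (g - 1) * c (2 * g - 1) * c (2 * g) * c (2 * g + 1) * c (2 * g + 1) * c (2 * g) *
      c (2 * g + 1) * c (2 * g) := by
  obtain ⟨m, rfl⟩ : ∃ m, g = 2 * m + 2 := by
    obtain ⟨n, rfl⟩ := hgeven
    exact ⟨n - 1, by omega⟩
  rw [show 2 * m + 2 - 1 = 2 * m + 1 by omega] at hchain' hlantern' ⊢
  simp only [Nat.add_sub_cancel] at hbe hlantern hlantern' hδe hδf ⊢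
  have hδp := commute_boundaryPair hδ₁ hδe hδf
  have hpair : boundaryPair c e f (2 * m) = e (2 * m) * f (2 * m) :=
    boundaryPair_of_pos c e f (by omega)
  have hstart : (c 1 * c 2) ^ 2 = c 1 * (c 1 * c 2 * (c 1)⁻¹) * boundaryPair c e f 0 :=
    mul_sq_of_braid_s14 hb₁
  have hmiddle := boundaryPair_zero_mul_prod_chainWord c e f x δ m hbe hchain
    (lantern_boundaryPair hlantern₁ hlantern) (fun i hi => hδp i hi.le) hδc
    (fun i hi hlt => hδe i hi.pos hlt.le) (fun i hi hlt => hδf i hi.pos hlt.le) hef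
  have hend := mul_mul_sq_inv_of_lantern hb₂ hchain'
    (hlantern'.trans (by rw [hpair, mul_assoc])) (hδp _ le_rfl)
  rw [hstart, mul_assoc _ (boundaryPair c e f 0), hmiddle, ← mul_assoc,
    mul_assoc _ (boundaryPair c e f (2 * m)), hend]
  simp only [mul_assoc]

end GroupWords

theorem even_genus_word {G : Type*} [Group G] (g : ℕ) (hg4 : 4 ≤ g) (hgeven : Even g)
    (c e f x δ : ℕ → G)
    (hb₁ : c 1 * c 2 * c 1 = c 2 * c 1 * c 2)
    (hb₂ : c (2*g) * c (2*g+1) * c (2*g) = c (2*g+1) * c (2*g) * c (2*g+1))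
    (hbe : ∀ i, 1 ≤ i → i ≤ g - 2 →
      c (2*i+2) * e i * c (2*i+2) = e i * c (2*i+2) * e i)
    (hbf : ∀ i, 1 ≤ i → i ≤ g - 2 →
      c (2*i+2) * f i * c (2*i+2) = f i * c (2*i+2) * f i)
    (hchain : ∀ i, Odd i → 1 ≤ i → i ≤ g - 3 →
      (c (2*i+2) * e i * c (2*i+2) * f i) ^ 3 = δ i * δ (i+1))
    (hchain' : (c (2*g+1) * c (2*g)) ^ 6 = δ (g-1))
    (hlantern₁ : δ 1 * x 1 * c 3 = c 1 * c 1 * e 1 * f 1)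
    (hlantern : ∀ i, 2 ≤ i → i ≤ g - 2 →
      δ i * x i * c (2*i+1) = e (i-1) * f (i-1) * e i * f i)
    (hlantern' : δ (g-1) * x (g-1) * c (2*g-1)
      = e (g-2) * f (g-2) * c (2*g+1) * c (2*g+1))
    (hδδ : ∀ i j, 1 ≤ i → i ≤ g-1 → 1 ≤ j → j ≤ g-1 → δ i * δ j = δ j * δ i)
    (hδc : ∀ i k, 1 ≤ i → i ≤ g-1 → 1 ≤ k → k ≤ 2*g+1 → δ i * c k = c k * δ i)
    (hδe : ∀ i k, 1 ≤ i → i ≤ g-1 → 1 ≤ k → k ≤ g-2 → δ i * e k = e k * δ i)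
    (hδf : ∀ i k, 1 ≤ i → i ≤ g-1 → 1 ≤ k → k ≤ g-2 → δ i * f k = f k * δ i)
    (hδx : ∀ i k, 1 ≤ i → i ≤ g-1 → 1 ≤ k → k ≤ g-1 → δ i * x k = x k * δ i)
    (hef : ∀ i, 1 ≤ i → i ≤ g-2 → e i * f i = f i * e i)
    (hee : ∀ i j, 1 ≤ i → i ≤ g-2 → 1 ≤ j → j ≤ g-2 → i ≠ j → e i * e j = e j * e i)
    (hef' : ∀ i j, 1 ≤ i → i ≤ g-2 → 1 ≤ j → j ≤ g-2 → i ≠ j → e i * f j = f j * e i)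
    (hff : ∀ i j, 1 ≤ i → i ≤ g-2 → 1 ≤ j → j ≤ g-2 → i ≠ j → f i * f j = f j * f i)
    (hex : ∀ i j, 1 ≤ i → i ≤ g-2 → 1 ≤ j → j ≤ g-1 → e i * x j = x j * e i)
    (hfx : ∀ i j, 1 ≤ i → i ≤ g-2 → 1 ≤ j → j ≤ g-1 → f i * x j = x j * f i)
    (hec : ∀ i k, 1 ≤ i → i ≤ g-2 → 1 ≤ k → k ≤ 2*g+1 → k ≠ 2*i+2 →
      e i * c k = c k * e i)
    (hfc : ∀ i k, 1 ≤ i → i ≤ g-2 → 1 ≤ k → k ≤ 2*g+1 → k ≠ 2*i+2 →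
      f i * c k = c k * f i)
    (hc₁x : c 1 * x 1 = x 1 * c 1)
    (hc₁c₃ : c 1 * c 3 = c 3 * c 1) :
    (c 1 * c 2) ^ 2 *
      ((List.Ico 1 (g-1)).map (fun i =>
        if Odd i then (c (2*i+2) * e i * c (2*i+2) * f i)⁻¹
        else c (2*i+2) * e i * c (2*i+2) * f i)).prod *
      ((c (2*g+1) * c (2*g)) ^ 2)⁻¹ =
    c 1 * (c 1 * c 2 * (c 1)⁻¹) *
      (((List.Ico 1 (g-2)).filter (fun j => Odd j)).map (fun j =>
        x j * c (2*j+1) * ((f j)⁻¹ * c (2*j+2) * f j) * e j * e j * c (2*j+2) *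
          x (j+1) * c (2*j+3) * (f (j+1))⁻¹ * c (2*j+4))).prod *
      x (g-1) * c (2*g-1) * c (2*g) * c (2*g+1) * c (2*g+1) * c (2*g) * c (2*g+1) *
      c (2*g) :=
  even_genus_word_general g hg4 hgeven c e f x δ hb₁ hb₂ hbe
    (fun i hi _ => hchain i hi hi.pos (by omega)) hchain' hlantern₁ hlantern hlantern'
    (hδc 1 1 le_rfl (by omega) le_rfl (by omega))
    (fun _ _ _ => hδc _ _ (by omega) (by omega) (by omega) (by omega))
    (fun _ hi _ => hδe _ _ (by omega) (by omega) hi (by omega))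
    (fun _ hi _ => hδf _ _ (by omega) (by omega) hi (by omega))
    (fun i hi _ => hef i hi.pos (by omega))
end
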